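/- Let L be a positive integer, and let P_s, P_n, P_i, N_d, λ be positive real numbers. Set ξ = N_d·P_s/(λ·(P_i + P_n)) and γ = L·λ·(P_n + P_i)/P_s. Then ∫₀^∞ Q(√(2·t·ξ)) · (L^L/(L−1)!) · t^{L−1} · e^{−L·t} dt = 1/2 − (1/2) · Σ_{i=0}^{L−1} C(2i, i) · (γ/(4·N_d))^i · (N_d/(N_d + γ))^{i + 1/2}, where C(2i, i) is the central binomial coefficient. -/

import Mathlib

/-- The Gaussian tail function `Q(x) = ∫_x^∞ (1/√(2π)) e^{−u²/2} du`. -/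
noncomputable def gaussQ (x : ℝ) : ℝ :=
  ∫ u in Set.Ioi x, (1 / Real.sqrt (2 * Real.pi)) * Real.exp (-u ^ 2 / 2)

/-!
Integrating by parts against the survival function `e^{-at} ∑_{i<n} (at)^i / i!` of the Gamma
distribution moves the derivative onto `t ↦ Q(√(2tξ))`, whose derivative is
`-½ √(ξ/π) t^{-1/2} e^{-ξt}`. The boundary term is `Q(0) = 1/2`, and the remaining integral is the
sum over `i < n`, with weights `a^i / i!`, of the Gamma integrals
`∫ t^{i-1/2} e^{-(ξ+a)t} dt = Γ(i+1/2) / (ξ+a)^{i+1/2}`, in which `Γ(i+1/2) = √π C(2i,i) i! / 4^i`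
produces the central binomial coefficients.
-/

open MeasureTheory ProbabilityTheory Set Filter Topology
open scoped Nat

section TailIntegral

variable {E : Type*} [NormedAddCommGroup E] [NormedSpace ℝ E] [CompleteSpace E]

lemma hasDerivAt_integral_Ioi {f : ℝ → E} {x : ℝ} (hf : Integrable f) (hfx : ContinuousAt f x) :
    HasDerivAt (fun y => ∫ u in Ioi y, f u) (-f x) x := by
  have tail_eq (y : ℝ) : ∫ u in Ioi y, f u = (∫ u in Ioi x, f u) - ∫ u in x..y, f u :=
    eq_sub_of_add_eq' <|
      intervalIntegral.integral_interval_add_Ioi hf.integrableOn hf.integrableOn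
  simp only [funext tail_eq]
  exact (intervalIntegral.integral_hasDerivAt_right hf.intervalIntegrable
    hf.aestronglyMeasurable.stronglyMeasurableAtFilter hfx).const_sub _

end TailIntegral

section GaussianTail

lemma gaussQ_eq_integral_gaussianPDFReal (x : ℝ) :
    gaussQ x = ∫ u in Ioi x, gaussianPDFReal 0 1 u := by
  simp [gaussQ, gaussianPDFReal]

lemma gaussQ_zero : gaussQ 0 = 1 / 2 := by
  have even (u : ℝ) : gaussianPDFReal 0 1 |u| = gaussianPDFReal 0 1 u := by
    simp [gaussianPDFReal]
  have total : 2 * gaussQ 0 = 1 := by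
    rw [gaussQ_eq_integral_gaussianPDFReal, ← integral_comp_abs]
    simp only [even, integral_gaussianPDFReal_eq_one 0 one_ne_zero]
  linarith

lemma gaussQ_nonneg (x : ℝ) : 0 ≤ gaussQ x := by
  rw [gaussQ_eq_integral_gaussianPDFReal]
  exact integral_nonneg (gaussianPDFReal_nonneg 0 1)

lemma gaussQ_le_one (x : ℝ) : gaussQ x ≤ 1 := by
  rw [gaussQ_eq_integral_gaussianPDFReal, ← integral_gaussianPDFReal_eq_one 0 one_ne_zero]
  exact setIntegral_le_integral (integrable_gaussianPDFReal 0 1)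
    (ae_of_all _ (gaussianPDFReal_nonneg 0 1))

lemma hasDerivAt_gaussQ (x : ℝ) : HasDerivAt gaussQ (-gaussianPDFReal 0 1 x) x := by
  have continuous_pdf : Continuous (gaussianPDFReal 0 1) := by
    unfold gaussianPDFReal
    fun_prop
  rw [funext gaussQ_eq_integral_gaussianPDFReal]
  exact hasDerivAt_integral_Ioi (integrable_gaussianPDFReal 0 1) continuous_pdf.continuousAt

lemma continuous_gaussQ : Continuous gaussQ :=
  continuous_iff_continuousAt.2 fun x => (hasDerivAt_gaussQ x).continuousAt

lemma hasDerivAt_gaussQ_sqrt {ξ t : ℝ} (hξ : 0 < ξ) (ht : 0 < t) :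
    HasDerivAt (fun t => gaussQ √(2 * t * ξ))
      (-(1 / 2 * √(ξ / Real.pi) * (t ^ (1 / 2 - 1 : ℝ) * Real.exp (-ξ * t)))) t := by
  have hpos : 0 < 2 * t * ξ := by positivity
  have deriv_inner : HasDerivAt (fun t : ℝ => 2 * t * ξ) (2 * ξ) t := by
    simpa using ((hasDerivAt_id t).const_mul 2).mul_const ξ
  refine ((hasDerivAt_gaussQ _).comp t (deriv_inner.sqrt hpos.ne')).congr_deriv ?_
  have pdf_eq : gaussianPDFReal 0 1 √(2 * t * ξ) = Real.exp (-ξ * t) / √(2 * Real.pi) := by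
    simp only [gaussianPDFReal, NNReal.coe_one, mul_one, sub_zero, Real.sq_sqrt hpos.le]
    rw [show -(2 * t * ξ) / 2 = -ξ * t by ring, div_eq_inv_mul]
  have rpow_eq : t ^ (1 / 2 - 1 : ℝ) = 1 / √t := by
    rw [show (1 / 2 - 1 : ℝ) = -(1 / 2) by norm_num, Real.rpow_neg ht.le, ← Real.sqrt_eq_rpow,
      one_div]
  have sqrt_prod : √(2 * Real.pi) * √(2 * t * ξ) = 2 * √Real.pi * √t * √ξ := by
    rw [← Real.sqrt_mul (by positivity), show 2 * Real.pi * (2 * t * ξ) = 2 ^ 2 * Real.pi * t * ξ by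
      ring, Real.sqrt_mul (by positivity), Real.sqrt_mul (by positivity),
      Real.sqrt_mul (by positivity), Real.sqrt_sq zero_le_two]
  calc -gaussianPDFReal 0 1 √(2 * t * ξ) * (2 * ξ / (2 * √(2 * t * ξ)))
      = -(Real.exp (-ξ * t) * ξ / (√(2 * Real.pi) * √(2 * t * ξ))) := by
        rw [pdf_eq]
        field_simp
    _ = -(Real.exp (-ξ * t) * √ξ ^ 2 / (2 * √Real.pi * √t * √ξ)) := by
        rw [sqrt_prod, Real.sq_sqrt hξ.le]
    _ = _ := by
        rw [rpow_eq, Real.sqrt_div hξ.le]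
        field_simp

end GaussianTail

section Erlang

/-- The density on `(0, ∞)` of the Erlang distribution, that is, the Gamma distribution with integer
shape `n` and rate `a`. It is meaningful for `0 < n`. -/
noncomputable def erlangPDF (n : ℕ) (a t : ℝ) : ℝ :=
  a ^ n / (n - 1)! * t ^ (n - 1) * Real.exp (-a * t)

/-- The survival function `P(T > t)` of an Erlang variable `T` with shape `n` and rate `a`, in
closed form: fewer than `n` events of a Poisson process of rate `a` have occurred by time `t`. -/
noncomputable def erlangSurvival (n : ℕ) (a t : ℝ) : ℝ :=
  ∑ i ∈ Finset.range n, a ^ i / i ! * (t ^ i * Real.exp (-a * t))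

variable {n : ℕ} {a ξ s t : ℝ}

lemma erlangPDF_nonneg (ha : 0 ≤ a) (ht : 0 ≤ t) : 0 ≤ erlangPDF n a t := by
  unfold erlangPDF
  positivity

lemma hasDerivAt_erlangSurvival (hn : 0 < n) (a t : ℝ) :
    HasDerivAt (erlangSurvival n a) (-erlangPDF n a t) t := by
  have deriv_exp : HasDerivAt (fun t : ℝ => Real.exp (-a * t)) (Real.exp (-a * t) * -a) t := by
    simpa using ((hasDerivAt_id t).const_mul (-a)).exp
  induction n, hn using Nat.le_induction with
  | base =>
    have survival_one : erlangSurvival 1 a = fun t => Real.exp (-a * t) := by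
      ext t
      simp [erlangSurvival]
    rw [survival_one]
    refine deriv_exp.congr_deriv ?_
    simp [erlangPDF, mul_comm]
  | succ n hn ih =>
    have survival_succ : erlangSurvival (n + 1) a = fun t =>
        erlangSurvival n a t + a ^ n / n ! * (t ^ n * Real.exp (-a * t)) := by
      ext t
      simp only [erlangSurvival, Finset.sum_range_succ]
    rw [survival_succ]
    refine (ih.add (((hasDerivAt_pow n t).mul deriv_exp).const_mul _)).congr_deriv ?_
    obtain ⟨m, rfl⟩ := Nat.exists_eq_add_of_le' hn
    simp only [erlangPDF, Nat.add_sub_cancel, Nat.factorial_succ m]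
    push_cast
    field_simp
    ring

lemma continuous_erlangSurvival (n : ℕ) (a : ℝ) : Continuous (erlangSurvival n a) := by
  unfold erlangSurvival
  fun_prop

lemma erlangSurvival_zero (hn : 0 < n) (a : ℝ) : erlangSurvival n a 0 = 1 := by
  obtain ⟨m, rfl⟩ := Nat.exists_eq_add_of_le' hn
  simp [erlangSurvival, Finset.sum_range_succ']

lemma tendsto_erlangSurvival_atTop (n : ℕ) (ha : 0 < a) :
    Tendsto (erlangSurvival n a) atTop (𝓝 0) := by
  have tendsto_term (i : ℕ) :
      Tendsto (fun t => a ^ i / i ! * (t ^ i * Real.exp (-a * t))) atTop (𝓝 0) := by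
    simpa using (tendsto_rpow_mul_exp_neg_mul_atTop_nhds_zero i a ha).const_mul (a ^ i / (i ! : ℝ))
  rw [← Finset.sum_const_zero (s := Finset.range n)]
  exact tendsto_finsetSum _ fun i _ => tendsto_term i

lemma integrableOn_erlangPDF (hn : 0 < n) (ha : 0 < a) : IntegrableOn (erlangPDF n a) (Ioi 0) :=
  integrableOn_Ioi_deriv_of_nonneg'
    (fun t _ => (hasDerivAt_erlangSurvival hn a t).neg.congr_deriv (neg_neg _))
    (fun _ ht => erlangPDF_nonneg ha.le (mem_Ioi.1 ht).le)
    (tendsto_erlangSurvival_atTop n ha).neg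

lemma integrableOn_rpow_mul_exp_neg_mul (hs : 0 < s) (ha : 0 < a) :
    IntegrableOn (fun t : ℝ => t ^ (s - 1) * Real.exp (-(a * t))) (Ioi 0) := by
  simpa using integrableOn_rpow_mul_exp_neg_mul_rpow (by linarith : -1 < s - 1) one_pos ha

lemma rpow_mul_exp_mul_erlangSurvival_eq_sum (n : ℕ) (a ξ s : ℝ) (ht : 0 < t) :
    t ^ (s - 1) * Real.exp (-ξ * t) * erlangSurvival n a t =
      ∑ i ∈ Finset.range n,
        a ^ i / i ! * (t ^ (s + i - 1) * Real.exp (-((ξ + a) * t))) := by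
  rw [erlangSurvival, Finset.mul_sum]
  refine Finset.sum_congr rfl fun i _ => ?_
  rw [show s + i - 1 = s - 1 + i by ring, Real.rpow_add_natCast ht.ne',
    show -((ξ + a) * t) = -ξ * t + -a * t by ring, Real.exp_add]
  ring

lemma integrableOn_rpow_mul_exp_mul_erlangSurvival (n : ℕ) (hs : 0 < s) (hξa : 0 < ξ + a) :
    IntegrableOn (fun t => t ^ (s - 1) * Real.exp (-ξ * t) * erlangSurvival n a t) (Ioi 0) := by
  refine (integrableOn_congr_fun
    (fun t ht => rpow_mul_exp_mul_erlangSurvival_eq_sum n a ξ s ht) measurableSet_Ioi).2 ?_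
  exact integrable_finsetSum _ fun i _ =>
    (integrableOn_rpow_mul_exp_neg_mul (by positivity) hξa).const_mul _

lemma integral_rpow_mul_exp_mul_erlangSurvival (n : ℕ) (hs : 0 < s) (hξa : 0 < ξ + a) :
    ∫ t in Ioi 0, t ^ (s - 1) * Real.exp (-ξ * t) * erlangSurvival n a t =
      ∑ i ∈ Finset.range n, a ^ i / i ! * ((1 / (ξ + a)) ^ (s + i) * Real.Gamma (s + i)) := by
  rw [setIntegral_congr_fun measurableSet_Ioi
    fun _ => rpow_mul_exp_mul_erlangSurvival_eq_sum n a ξ s,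
    integral_finsetSum _ fun i _ =>
      (integrableOn_rpow_mul_exp_neg_mul (by positivity) hξa).const_mul _]
  refine Finset.sum_congr rfl fun i _ => ?_
  rw [integral_const_mul, Real.integral_rpow_mul_exp_neg_mul_Ioi (by positivity) hξa]

end Erlang

section CentralBinomial

lemma two_pow_mul_doubleFactorial_two_mul_sub_one (k : ℕ) :
    2 ^ k * (2 * k - 1)‼ = k ! * k.centralBinom := by
  have factorial_two_mul : (2 * k)! = 2 ^ k * k ! * (2 * k - 1)‼ := by
    cases k with
    | zero => rfl
    | succ k =>
      rw [← Nat.doubleFactorial_two_mul]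
      exact Nat.factorial_eq_mul_doubleFactorial (2 * k + 1)
  have choose_mul : k.centralBinom * k ! * k ! = (2 * k)! := by
    simpa [Nat.centralBinom, two_mul] using Nat.add_choose_mul_factorial_mul_factorial k k
  apply Nat.eq_of_mul_eq_mul_left k.factorial_pos
  linarith

lemma Gamma_nat_add_half_eq_centralBinom (k : ℕ) :
    Real.Gamma (k + 1 / 2) = √Real.pi * k ! * k.centralBinom / 4 ^ k := by
  have doubleFactorial_eq : (2 ^ k * (2 * k - 1)‼ : ℝ) = k ! * k.centralBinom := by
    exact_mod_cast two_pow_mul_doubleFactorial_two_mul_sub_one k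
  rw [Real.Gamma_nat_add_half, mul_assoc, ← doubleFactorial_eq,
    show (4 : ℝ) = 2 * 2 by norm_num, mul_pow]
  field_simp

end CentralBinomial

section GaussianTailMean

variable {n : ℕ} {a ξ : ℝ}

lemma integral_gaussQ_sqrt_mul_erlangPDF_eq_sub (hn : 0 < n) (ha : 0 < a) (hξ : 0 < ξ) :
    ∫ t in Ioi 0, gaussQ √(2 * t * ξ) * erlangPDF n a t =
      1 / 2 - 1 / 2 * √(ξ / Real.pi) *
        ∫ t in Ioi 0, t ^ (1 / 2 - 1 : ℝ) * Real.exp (-ξ * t) * erlangSurvival n a t := by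
  let q : ℝ → ℝ := fun t => gaussQ √(2 * t * ξ)
  let q' : ℝ → ℝ := fun t => -(1 / 2 * √(ξ / Real.pi) * (t ^ (1 / 2 - 1 : ℝ) * Real.exp (-ξ * t)))
  have deriv_mul_eq : q' * erlangSurvival n a = fun t => -(1 / 2 * √(ξ / Real.pi)) *
      (t ^ (1 / 2 - 1 : ℝ) * Real.exp (-ξ * t) * erlangSurvival n a t) := by
    ext t
    simp only [q', Pi.mul_apply]
    ring
  have continuous_q : Continuous q := continuous_gaussQ.comp (by fun_prop)
  have integrable_q_mul : IntegrableOn (q * -erlangPDF n a) (Ioi 0) :=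
    (integrableOn_erlangPDF hn ha).neg.bdd_mul continuous_q.aestronglyMeasurable <| ae_of_all _
      fun t => by simpa [q, abs_of_nonneg (gaussQ_nonneg _)] using gaussQ_le_one _
  have integrable_deriv_mul : IntegrableOn (q' * erlangSurvival n a) (Ioi 0) := by
    rw [deriv_mul_eq]
    exact (integrableOn_rpow_mul_exp_mul_erlangSurvival n one_half_pos (add_pos hξ ha)).const_mul _
  have value_zero : (q * erlangSurvival n a) 0 = 1 / 2 := by
    simp [q, gaussQ_zero, erlangSurvival_zero hn]
  have tendsto_zero : Tendsto (q * erlangSurvival n a) (𝓝[>] 0) (𝓝 (1 / 2)) := by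
    rw [← value_zero]
    exact (continuous_q.mul (continuous_erlangSurvival n a)).continuousWithinAt
  have tendsto_atTop : Tendsto (q * erlangSurvival n a) atTop (𝓝 0) :=
    bdd_le_mul_tendsto_zero (.of_forall fun _ => gaussQ_nonneg _)
      (.of_forall fun _ => gaussQ_le_one _) (tendsto_erlangSurvival_atTop n ha)
  have by_parts : ∫ t in Ioi 0, q t * -erlangPDF n a t =
      0 - 1 / 2 - ∫ t in Ioi 0, (q' * erlangSurvival n a) t :=
    integral_Ioi_mul_deriv_eq_deriv_mul (fun t ht => hasDerivAt_gaussQ_sqrt hξ ht)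
      (fun t _ => hasDerivAt_erlangSurvival hn a t)
      integrable_q_mul integrable_deriv_mul tendsto_zero tendsto_atTop
  simp only [deriv_mul_eq, mul_neg, integral_neg, integral_const_mul] at by_parts
  linarith

theorem integral_gaussQ_sqrt_mul_erlangPDF (hn : 0 < n) (ha : 0 < a) (hξ : 0 < ξ) :
    ∫ t in Ioi 0, gaussQ √(2 * t * ξ) * erlangPDF n a t =
      1 / 2 - 1 / 2 * ∑ i ∈ Finset.range n,
        (i.centralBinom : ℝ) * (a / (4 * ξ)) ^ i * (ξ / (ξ + a)) ^ ((i : ℝ) + 1 / 2) := by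
  rw [integral_gaussQ_sqrt_mul_erlangPDF_eq_sub hn ha hξ,
    integral_rpow_mul_exp_mul_erlangSurvival n one_half_pos (add_pos hξ ha), mul_assoc,
    Finset.mul_sum]
  congr 2
  refine Finset.sum_congr rfl fun i _ => ?_
  have rpow_eq : (ξ / (ξ + a)) ^ ((i : ℝ) + 1 / 2) =
      ξ ^ i * √ξ * (1 / (ξ + a)) ^ ((i : ℝ) + 1 / 2) := by
    rw [div_eq_mul_one_div, Real.mul_rpow hξ.le (by positivity), Real.rpow_add hξ,
      Real.rpow_natCast, Real.sqrt_eq_rpow]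
  rw [add_comm (1 / 2 : ℝ), Gamma_nat_add_half_eq_centralBinom, rpow_eq, Real.sqrt_div hξ.le,
    div_pow, mul_pow]
  field_simp

end GaussianTailMean

/-- With `ξ = N_d·P_s/(λ(P_i + P_n))` and `γ = Lλ(P_n + P_i)/P_s`, the expectation of
`Q(√(2tξ))` under the Gamma density `(L^L/(L−1)!) t^{L−1} e^{−Lt}` equals
`1/2 − (1/2)·Σ_{i=0}^{L−1} C(2i,i)·(γ/(4N_d))^i·(N_d/(N_d+γ))^{i+1/2}`. -/
theorem BER_stationary_interference
    (L : ℕ) (hL : 0 < L) (Ps Pn Pi Nd lam ξ γ : ℝ)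
    (hPs : 0 < Ps) (hPn : 0 < Pn) (hPi : 0 < Pi) (hNd : 0 < Nd) (hlam : 0 < lam)
    (hξ : ξ = Nd * Ps / (lam * (Pi + Pn)))
    (hγ : γ = (L : ℝ) * lam * (Pn + Pi) / Ps) :
    ∫ t in Set.Ioi (0 : ℝ),
        gaussQ (Real.sqrt (2 * t * ξ)) *
          ((L : ℝ) ^ L / (Nat.factorial (L - 1) : ℝ)) * t ^ (L - 1) *
          Real.exp (-(L : ℝ) * t)
      = 1 / 2 - 1 / 2 *
          ∑ i ∈ Finset.range L, (Nat.choose (2 * i) i : ℝ) * (γ / (4 * Nd)) ^ i *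
            (Nd / (Nd + γ)) ^ ((i : ℝ) + 1 / 2) := by
  have L_pos : (0 : ℝ) < L := by exact_mod_cast hL
  have ξ_pos : 0 < ξ := by
    rw [hξ]
    positivity
  have γ_eq : γ = Nd * L / ξ := by
    rw [hγ, hξ]
    field_simp
    ring
  have γ_div : γ / (4 * Nd) = L / (4 * ξ) := by
    rw [γ_eq]
    field_simp
  have Nd_div : Nd / (Nd + γ) = ξ / (ξ + L) := by
    rw [γ_eq]
    field_simp
  simpa only [erlangPDF, γ_div, Nd_div, Nat.centralBinom_eq_two_mul_choose, mul_assoc] using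
    integral_gaussQ_sqrt_mul_erlangPDF hL L_pos ξ_pos
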